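/- Let S be a bounded linear operator on H admitting an A-adjoint. Then ω_A(S)² ≤ (1/√2) · ω_A( S^{♯_A} S + i S S^{♯_A} ). -/

import Mathlib

noncomputable section

open ContinuousLinearMap

variable {H : Type*} [NormedAddCommGroup H] [InnerProductSpace ℂ H] [CompleteSpace H]

/-- The semi-inner product induced by the positive operator `A`: `⟨x, y⟩_A := ⟨A x, y⟩`. -/
def innA (A : H →L[ℂ] H) (x y : H) : ℂ := inner ℂ (A x) y

/-- The seminorm induced by `A`: `‖x‖_A := ⟨x, x⟩_A ^ (1/2)`. -/
def vnormA (A : H →L[ℂ] H) (x : H) : ℝ := Real.sqrt (innA A x x).re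

/-- The `A`-operator seminorm: `‖T‖_A := sup {‖T x‖_A : ‖x‖_A = 1}`. -/
def opNormA (A T : H →L[ℂ] H) : ℝ :=
  sSup {c : ℝ | ∃ x : H, vnormA A x = 1 ∧ c = vnormA A (T x)}

/-- The `A`-numerical radius: `ω_A(T) := sup {|⟨T x, x⟩_A| : ‖x‖_A = 1}`. -/
def wA (A T : H →L[ℂ] H) : ℝ :=
  sSup {c : ℝ | ∃ x : H, vnormA A x = 1 ∧ c = ‖innA A (T x) x‖}

/-- `T` admits an `A`-adjoint: there is a bounded operator `X` with `A X = T* A`. -/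
def HasAAdjoint (A T : H →L[ℂ] H) : Prop :=
  ∃ X : H →L[ℂ] H, A ∘L X = adjoint T ∘L A

/-- `X` is the reduced `A`-adjoint `T^{♯_A}` of `T`: it solves `A X = T* A` and its range
is contained in the closure of the range of `A`. -/
def IsReducedAAdjoint (A T X : H →L[ℂ] H) : Prop :=
  (A ∘L X = adjoint T ∘L A) ∧ ∀ y : H, X y ∈ closure (Set.range A)

set_option linter.unusedSectionVars false

/-- A positive operator factors its semi-inner product through the ambient inner product. -/
lemma exists_innA_eq_inner {A : H →L[ℂ] H} (hA : A.IsPositive) :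
    ∃ B : H →L[ℂ] H, ∀ x y, innA A x y = inner ℂ (B x) (B y) := by
  obtain ⟨B, rfl⟩ := CStarAlgebra.nonneg_iff_eq_star_mul_self.1
    ((ContinuousLinearMap.nonneg_iff_isPositive A).2 hA)
  refine ⟨B, fun x y => ?_⟩
  rw [innA, star_eq_adjoint, mul_apply_eq_comp, adjoint_inner_left]

lemma vnormA_eq_norm {A B : H →L[ℂ] H} (hB : ∀ x y, innA A x y = inner ℂ (B x) (B y)) (x : H) :
    vnormA A x = ‖B x‖ := by
  rw [vnormA, hB, inner_self_eq_norm_sq_to_K]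
  norm_cast
  exact Real.sqrt_sq (norm_nonneg _)

lemma norm_pow_le_of_symmetric {B R : H →L[ℂ] H}
    (hR : ∀ x y, inner ℂ (B (R x)) (B y) = inner ℂ (B x) (B (R y)))
    {x : H} (hx : ‖B x‖ = 1) (k : ℕ) :
    ‖B (R x)‖ ^ 2 ^ k ≤ ‖B ((R ^ 2 ^ k) x)‖ := by
  induction k generalizing R with
  | zero => simp
  | succ k ih =>
    have hsq : ‖B (R x)‖ ^ 2 ≤ ‖B ((R ^ 2) x)‖ := by
      calc ‖B (R x)‖ ^ 2 = ‖inner ℂ (B (R x)) (B (R x))‖ := by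
            rw [inner_self_eq_norm_sq_to_K]; simp
        _ = ‖inner ℂ (B x) (B ((R ^ 2) x))‖ := by rw [hR, pow_two, mul_apply_eq_comp]
        _ ≤ ‖B x‖ * ‖B ((R ^ 2) x)‖ := norm_inner_le_norm _ _
        _ = ‖B ((R ^ 2) x)‖ := by rw [hx, one_mul]
    rw [pow_succ', pow_mul, pow_mul]
    refine (pow_le_pow_left₀ (by positivity) hsq _).trans (ih fun y z => ?_)
    rw [pow_two, mul_apply_eq_comp, mul_apply_eq_comp, hR, hR]

/-- An operator symmetric for a semi-inner product is bounded for the induced seminorm. -/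
lemma norm_apply_le_of_symmetric {B R : H →L[ℂ] H}
    (hR : ∀ x y, inner ℂ (B (R x)) (B y) = inner ℂ (B x) (B (R y)))
    {x : H} (hx : ‖B x‖ = 1) : ‖B (R x)‖ ≤ ‖R‖ := by
  by_contra! hlt
  have hpow (k : ℕ) : ‖B (R x)‖ ^ 2 ^ k ≤ ‖B‖ * ‖x‖ * ‖R‖ ^ 2 ^ k :=
    calc ‖B (R x)‖ ^ 2 ^ k ≤ ‖B ((R ^ 2 ^ k) x)‖ := norm_pow_le_of_symmetric hR hx k
      _ ≤ ‖B‖ * (‖R ^ 2 ^ k‖ * ‖x‖) := B.le_opNorm_of_le (le_opNorm _ _)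
      _ ≤ ‖B‖ * (‖R‖ ^ 2 ^ k * ‖x‖) := by
        gcongr
        exact norm_pow_le' R (by positivity)
      _ = ‖B‖ * ‖x‖ * ‖R‖ ^ 2 ^ k := by ring
  rcases (norm_nonneg R).eq_or_lt with h0 | h0
  · have h := hpow 0
    rw [← h0] at h hlt
    simp only [pow_zero, pow_one, mul_zero] at h
    exact absurd h hlt.not_ge
  · have hratio : 1 < ‖B (R x)‖ / ‖R‖ := (one_lt_div h0).2 hlt
    obtain ⟨n, hn⟩ := pow_unbounded_of_one_lt (‖B‖ * ‖x‖) hratio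
    have h := hpow n
    rw [← div_le_iff₀ (by positivity), ← div_pow] at h
    exact absurd ((pow_le_pow_right₀ hratio.le Nat.lt_two_pow_self.le).trans h) hn.not_ge

lemma innA_apply_left {A S X : H →L[ℂ] H} (hA : A.IsPositive) (h : A ∘L X = adjoint S ∘L A)
    (x y : H) : innA A (S x) y = innA A x (X y) := by
  have hy : A (X y) = adjoint S (A y) := DFunLike.congr_fun h y
  rw [innA, innA, hA.inner_left_eq_inner_right, hA.inner_left_eq_inner_right, hy,
    adjoint_inner_right]

lemma innA_adjoint_apply_left {A S X : H →L[ℂ] H} (h : A ∘L X = adjoint S ∘L A)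
    (x y : H) : innA A (X x) y = innA A x (S y) := by
  have hx : A (X x) = adjoint S (A x) := DFunLike.congr_fun h x
  rw [innA, innA, hx, adjoint_inner_left]

lemma le_norm_ofReal_sub_I_mul {a b c : ℝ} (hc : 0 ≤ c) (ha : c ≤ a) (hb : c ≤ b) :
    c ≤ 1 / √2 * ‖(a : ℂ) - Complex.I * b‖ := by
  have hnorm : ‖(a : ℂ) - Complex.I * b‖ = √(a ^ 2 + b ^ 2) := by
    rw [Complex.norm_def, Complex.normSq_apply]
    simp [pow_two]
  rw [hnorm, one_div_mul_eq_div, le_div_iff₀ (by positivity)]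
  refine Real.le_sqrt_of_sq_le ?_
  rw [mul_pow, Real.sq_sqrt zero_le_two]
  nlinarith [pow_le_pow_left₀ hc ha 2, pow_le_pow_left₀ hc hb 2]

theorem stmt16 (A : H →L[ℂ] H) (hA : A.IsPositive) (hA0 : A ≠ 0)
    (S Ssharp : H →L[ℂ] H) (hS : IsReducedAAdjoint A S Ssharp) :
    wA A S ^ 2 ≤ (1 / Real.sqrt 2) * wA A (Ssharp * S + Complex.I • (S * Ssharp)) := by
  obtain ⟨B, hB⟩ := exists_innA_eq_inner hA
  have hleft : ∀ x y, inner ℂ (B (S x)) (B y) = inner ℂ (B x) (B (Ssharp y)) := fun x y => by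
    rw [← hB, ← hB, innA_apply_left hA hS.1]
  have hright : ∀ x y, inner ℂ (B (Ssharp x)) (B y) = inner ℂ (B x) (B (S y)) := fun x y => by
    rw [← hB, ← hB, innA_adjoint_apply_left hS.1]
  have hform (x : H) : innA A ((Ssharp * S + Complex.I • (S * Ssharp)) x) x =
      ((‖B (S x)‖ ^ 2 : ℝ) : ℂ) - Complex.I * ((‖B (Ssharp x)‖ ^ 2 : ℝ) : ℂ) := by
    rw [hB, add_apply, smul_apply, mul_apply_eq_comp, mul_apply_eq_comp, map_add, map_smul,
      inner_add_left, inner_smul_left, hright, hleft (Ssharp x), inner_self_eq_norm_sq_to_K,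
      inner_self_eq_norm_sq_to_K]
    simp [sub_eq_add_neg]
  have hbdd : BddAbove {c : ℝ | ∃ x : H, vnormA A x = 1 ∧
      c = ‖innA A ((Ssharp * S + Complex.I • (S * Ssharp)) x) x‖} := by
    refine ⟨‖Ssharp * S‖ + ‖S * Ssharp‖, ?_⟩
    rintro _ ⟨x, hx, rfl⟩
    rw [vnormA_eq_norm hB] at hx
    have h₁ : ‖B ((Ssharp * S) x)‖ ≤ ‖Ssharp * S‖ :=
      norm_apply_le_of_symmetric (fun y z => by simp only [mul_apply_eq_comp, hleft, hright]) hx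
    have h₂ : ‖B ((S * Ssharp) x)‖ ≤ ‖S * Ssharp‖ :=
      norm_apply_le_of_symmetric (fun y z => by simp only [mul_apply_eq_comp, hleft, hright]) hx
    rw [hB]
    refine (norm_inner_le_norm _ _).trans ?_
    rw [hx, mul_one, add_apply, smul_apply, map_add, map_smul]
    refine (norm_add_le _ _).trans (add_le_add h₁ ?_)
    rwa [norm_smul, Complex.norm_I, one_mul]
  have hnonneg : 0 ≤ wA A (Ssharp * S + Complex.I • (S * Ssharp)) :=
    Real.sSup_nonneg (by rintro _ ⟨x, -, rfl⟩; exact norm_nonneg _)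
  have hS_nonneg : 0 ≤ wA A S :=
    Real.sSup_nonneg (by rintro _ ⟨x, -, rfl⟩; exact norm_nonneg _)
  rw [← Real.le_sqrt hS_nonneg (by positivity)]
  refine Real.sSup_le ?_ (Real.sqrt_nonneg _)
  rintro _ ⟨x, hx, rfl⟩
  refine Real.le_sqrt_of_sq_le ?_
  have hBx : ‖B x‖ = 1 := (vnormA_eq_norm hB x).symm.trans hx
  have ha : ‖innA A (S x) x‖ ≤ ‖B (S x)‖ := by
    rw [hB]
    simpa [hBx] using norm_inner_le_norm (𝕜 := ℂ) (B (S x)) (B x)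
  have hb : ‖innA A (S x) x‖ ≤ ‖B (Ssharp x)‖ := by
    rw [hB, hleft]
    simpa [hBx] using norm_inner_le_norm (𝕜 := ℂ) (B x) (B (Ssharp x))
  calc ‖innA A (S x) x‖ ^ 2
      ≤ 1 / √2 * ‖innA A ((Ssharp * S + Complex.I • (S * Ssharp)) x) x‖ := by
        rw [hform]
        exact le_norm_ofReal_sub_I_mul (by positivity)
          (pow_le_pow_left₀ (norm_nonneg _) ha 2) (pow_le_pow_left₀ (norm_nonneg _) hb 2)
    _ ≤ 1 / √2 * wA A (Ssharp * S + Complex.I • (S * Ssharp)) := by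
        gcongr
        exact le_csSup hbdd ⟨x, hx, rfl⟩
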